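/- arXiv:1810.09344 — 2 statements merged into one kernel-verified Lean document; each statement's English description precedes it below -/
import Mathlib

section
/- Let V be a real Hilbert space, r > 1, and let v : Y → V belong to the class A^r with ‖v‖_{A^r} ≤ M0 and ‖v‖_{L^∞(Y,V)} := sup_{y∈Y} ‖v(y)‖ = M > 0, where Y = [−1,1]^d. Let m ≥ 1 be an integer such that 4·M0·m^{−r+1} < M, and let N ≥ 1. Then the set of N-tuples (y_1,…,y_N) ∈ Y^N with max_{1≤i≤N} ‖v(y_i)‖ ≥ M/(8m) has ρ^{⊗N}-measure at least 1 − (1 − 3/(4m²))^N, where ρ is the uniform probability measure on Y. -/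
open MeasureTheory

/-- The parameter cube `Y = [-1,1]^d`. -/
def cube (d : ℕ) : Set (Fin d → ℝ) := Set.univ.pi fun _ => Set.Icc (-1 : ℝ) 1

/-- A finite set `Λ ⊂ ℕ^d` is downward closed if `ν ∈ Λ` and `μ ≤ ν` (componentwise)
imply `μ ∈ Λ`. -/
def DownwardClosed {d : ℕ} (Λ : Finset (Fin d → ℕ)) : Prop :=
  ∀ ν ∈ Λ, ∀ μ : Fin d → ℕ, μ ≤ ν → μ ∈ Λ

/-- The `V`-valued polynomial `y ↦ ∑_{ν ∈ Λ} y^ν • a_ν`, with `y^ν = ∏_j y_j^{ν_j}`. -/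
noncomputable def polyEval {d : ℕ} {V : Type*} [AddCommGroup V] [Module ℝ V]
    (Λ : Finset (Fin d → ℕ)) (a : (Fin d → ℕ) → V) (y : Fin d → ℝ) : V :=
  ∑ ν ∈ Λ, (∏ j, y j ^ ν j) • a ν

/-- `δ_m(v)`: the error of best uniform approximation of `v` on `Y = [-1,1]^d`
by `V`-valued polynomials supported on a downward closed index set of cardinality `m`. -/
noncomputable def deltaApprox {d : ℕ} {V : Type*} [NormedAddCommGroup V] [Module ℝ V]
    (v : (Fin d → ℝ) → V) (m : ℕ) : ℝ :=
  sInf { e | ∃ (Λ : Finset (Fin d → ℕ)) (a : (Fin d → ℕ) → V),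
    DownwardClosed Λ ∧ Λ.card = m ∧ e = ⨆ y ∈ cube d, ‖v y - polyEval Λ a y‖ }

/-- Membership in the approximation class `A^r`: `δ_m(v) ≤ C m^{-r}` for all `m ≥ 1`. -/
def MemA {d : ℕ} {V : Type*} [NormedAddCommGroup V] [Module ℝ V]
    (r : ℝ) (v : (Fin d → ℝ) → V) : Prop :=
  ∃ C : ℝ, 0 ≤ C ∧ ∀ m : ℕ, 1 ≤ m → deltaApprox v m ≤ C * (m : ℝ) ^ (-r)

/-- The seminorm `|v|_{A^r}`: the smallest constant `C ≥ 0` with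
`δ_m(v) ≤ C m^{-r}` for all `m ≥ 1`. -/
noncomputable def semiA {d : ℕ} {V : Type*} [NormedAddCommGroup V] [Module ℝ V]
    (r : ℝ) (v : (Fin d → ℝ) → V) : ℝ :=
  sInf { C | 0 ≤ C ∧ ∀ m : ℕ, 1 ≤ m → deltaApprox v m ≤ C * (m : ℝ) ^ (-r) }

/-- The norm `‖v‖_{A^r} = max{‖v‖_{L^∞(Y,V)}, |v|_{A^r}}`. -/
noncomputable def normA {d : ℕ} {V : Type*} [NormedAddCommGroup V] [Module ℝ V]
    (r : ℝ) (v : (Fin d → ℝ) → V) : ℝ :=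
  max (⨆ y ∈ cube d, ‖v y‖) (semiA r v)

/-- The uniform probability measure on the cube `Y = [-1,1]^d`. -/
noncomputable def uniformCube (d : ℕ) : Measure (Fin d → ℝ) :=
  Measure.pi fun _ => (2 : ENNReal)⁻¹ • (volume.restrict (Set.Icc (-1 : ℝ) 1))

/-!
A polynomial supported on a downward closed set of `m` multi-indices satisfies
`‖P y₀‖² ≤ m² ∫ ‖P‖²` at every point `y₀` of the cube. In one variable and degree at most `n` the
constant is `(n + 1)²`: at an endpoint of an interval this is the value of the reproducing kernel
there, given by Legendre polynomials, and an interior point is an endpoint of both halves into which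
it cuts the interval. By duality the one-variable inequality says that the squares of the first `n`
orthonormal Legendre polynomials sum to at most `n²` at each point; this passes to tensor products
over a downward closed set by summation by parts over its slices, whose cardinalities decrease.

Now let `P` approximate `v` within `M / (4m)` and let `‖P‖` attain its maximum `B ≥ 3M / 4` at `y₀`.
A reverse Markov inequality for `‖P‖²` shows that `‖P‖ ≥ B / (2m)`, and hence
`‖v‖ ≥ B / (2m) - M / (4m) ≥ M / (8m)`, holds with probability at least `3 / (4m²)`. Independence
of the sample points gives the probability that this happens at least once.
-/

open Polynomial

/-! ### One-variable polynomial inequalities -/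

/-- The functional `p ↦ ∫ x in a..b, p(x)` on real polynomials. -/
noncomputable def polyIntegral (a b : ℝ) : ℝ[X] →ₗ[ℝ] ℝ where
  toFun p := ∫ x in a..b, p.eval x
  map_add' p q := by
    simpa only [eval_add] using intervalIntegral.integral_add
      (p.continuous.intervalIntegrable a b) (q.continuous.intervalIntegrable a b)
  map_smul' c p := by
    simp only [eval_smul, smul_eq_mul, intervalIntegral.integral_const_mul, RingHom.id_apply]

lemma polyIntegral_apply (a b : ℝ) (p : ℝ[X]) : polyIntegral a b p = ∫ x in a..b, p.eval x := rfl

lemma polyIntegral_derivative (a b : ℝ) (p : ℝ[X]) :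
    polyIntegral a b (derivative p) = p.eval b - p.eval a :=
  intervalIntegral.integral_eq_sub_of_hasDerivAt (fun x _ => p.hasDerivAt x)
    (p.derivative.continuous.intervalIntegrable a b)

lemma polyIntegral_derivative_mul (a b : ℝ) (p q : ℝ[X]) :
    polyIntegral a b (derivative p * q) =
      p.eval b * q.eval b - p.eval a * q.eval a - polyIntegral a b (p * derivative q) := by
  rw [← eval_mul, ← eval_mul, ← polyIntegral_derivative, derivative_mul, map_add,
    add_sub_cancel_right]

lemma polyIntegral_add_adjacent (a b c : ℝ) (p : ℝ[X]) :
    polyIntegral a b p + polyIntegral b c p = polyIntegral a c p :=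
  intervalIntegral.integral_add_adjacent_intervals (p.continuous.intervalIntegrable a b)
    (p.continuous.intervalIntegrable b c)

lemma mul_polyIntegral_comp (a b : ℝ) (p : ℝ[X]) :
    (b - a) * polyIntegral 0 1 (p.comp (C (b - a) * X + C a)) = polyIntegral a b p := by
  simpa [polyIntegral_apply] using
    intervalIntegral.mul_integral_comp_mul_add (f := fun x => p.eval x) (a := 0) (b := 1) (b - a) a

lemma polyIntegral_sq_nonneg {a b : ℝ} (hab : a ≤ b) (p : ℝ[X]) :
    0 ≤ polyIntegral a b (p ^ 2) :=
  intervalIntegral.integral_nonneg hab fun x _ => by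
    simpa only [eval_pow] using sq_nonneg (p.eval x)

lemma polyIntegral_mul_sq_le {a b : ℝ} (hab : a ≤ b) (p q : ℝ[X]) :
    polyIntegral a b (p * q) ^ 2 ≤ polyIntegral a b (p ^ 2) * polyIntegral a b (q ^ 2) := by
  let B : LinearMap.BilinForm ℝ ℝ[X] := (LinearMap.mul ℝ ℝ[X]).compr₂ (polyIntegral a b)
  have hB : ∀ p q, B p q = polyIntegral a b (p * q) := fun _ _ => rfl
  have hB_nonneg : ∀ p, 0 ≤ B p p := fun p => by
    simpa only [hB, ← sq] using polyIntegral_sq_nonneg hab p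
  have hB_symm : LinearMap.IsSymm B := ⟨fun p q => by simp only [hB, mul_comm, RingHom.id_apply]⟩
  simpa only [hB, ← sq] using B.apply_sq_le_of_symm hB_nonneg hB_symm p q

lemma polyIntegral_iterate_derivative_mul_eq_zero {a b : ℝ} {n : ℕ} {w q : ℝ[X]}
    (ha : (X - C a) ^ n ∣ w) (hb : (X - C b) ^ n ∣ w) (hq : q.degree < n) :
    polyIntegral a b (derivative^[n] w * q) = 0 := by
  induction n generalizing q with
  | zero => simp [degree_eq_bot.mp (Nat.WithBot.lt_zero_iff.mp hq)]
  | succ n ih =>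
    have eval_eq_zero : ∀ c, (X - C c) ^ (n + 1) ∣ w → (derivative^[n] w).eval c = 0 := by
      intro c hc
      have hdvd := pow_sub_dvd_iterate_derivative_of_pow_dvd n hc
      rwa [Nat.add_sub_cancel_left, pow_one, dvd_iff_isRoot] at hdvd
    have hq' : (derivative q).degree < n := by
      rw [degree_lt_iff_coeff_zero] at hq ⊢
      intro k hk
      rw [coeff_derivative, hq (k + 1) (by gcongr), zero_mul]
    rw [Function.iterate_succ_apply', polyIntegral_derivative_mul, eval_eq_zero a ha,
      eval_eq_zero b hb, ih ((pow_dvd_pow _ n.le_succ).trans ha)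
        ((pow_dvd_pow _ n.le_succ).trans hb) hq']
    ring

/-- The shifted Legendre polynomial, orthogonal on `[0, 1]` to all polynomials of smaller degree,
with real coefficients. -/
noncomputable def realShiftedLegendre (n : ℕ) : ℝ[X] :=
  (shiftedLegendre n).map (Int.castRingHom ℝ)

lemma coeff_realShiftedLegendre (n k : ℕ) :
    (realShiftedLegendre n).coeff k = (-1) ^ k * n.choose k * (n + k).choose n := by
  simp [realShiftedLegendre, coeff_shiftedLegendre]

lemma degree_realShiftedLegendre (n : ℕ) : (realShiftedLegendre n).degree = n := by
  rw [realShiftedLegendre, degree_map_eq_of_injective (RingHom.injective_int _),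
    degree_shiftedLegendre]

lemma natDegree_realShiftedLegendre (n : ℕ) : (realShiftedLegendre n).natDegree = n :=
  natDegree_eq_of_degree_eq_some (degree_realShiftedLegendre n)

lemma eval_zero_realShiftedLegendre (n : ℕ) : (realShiftedLegendre n).eval 0 = 1 := by
  simp [← coeff_zero_eq_eval_zero, coeff_realShiftedLegendre]

lemma eval_one_realShiftedLegendre (n : ℕ) : (realShiftedLegendre n).eval 1 = (-1) ^ n := by
  have aeval_eq : ∀ x : ℝ, aeval x (shiftedLegendre n) = (realShiftedLegendre n).eval x :=
    fun x => (eval_map_algebraMap _ x).symm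
  simpa [aeval_eq, eval_zero_realShiftedLegendre] using shiftedLegendre_eval_symm n (1 : ℝ)

lemma eval_zero_derivative_realShiftedLegendre (n : ℕ) :
    (derivative (realShiftedLegendre n)).eval 0 = -(n * (n + 1)) := by
  simp [← coeff_zero_eq_eval_zero, coeff_derivative, coeff_realShiftedLegendre]

lemma polyIntegral_realShiftedLegendre_mul_eq_zero {n : ℕ} {q : ℝ[X]} (hq : q.degree < n) :
    polyIntegral 0 1 (realShiftedLegendre n * q) = 0 := by
  have rodrigues : (n.factorial : ℝ) • realShiftedLegendre n =
      derivative^[n] (X ^ n * (1 - X) ^ n) := by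
    have h := congrArg (map (Int.castRingHom ℝ)) (factorial_mul_shiftedLegendre_eq n)
    simpa [realShiftedLegendre, ← iterate_derivative_map, smul_eq_C_mul] using h
  have orthogonal : polyIntegral 0 1 (derivative^[n] (X ^ n * (1 - X) ^ n) * q) = 0 :=
    polyIntegral_iterate_derivative_mul_eq_zero (by simp)
      (dvd_mul_of_dvd_right (pow_dvd_pow_of_dvd ⟨-1, by simp⟩ n) _) hq
  rw [← rodrigues, smul_mul_assoc, map_smul, smul_eq_mul] at orthogonal
  exact (mul_eq_zero.mp orthogonal).resolve_left (by positivity)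

lemma polyIntegral_realShiftedLegendre_mul_of_ne {m n : ℕ} (hmn : m ≠ n) :
    polyIntegral 0 1 (realShiftedLegendre m * realShiftedLegendre n) = 0 := by
  rcases hmn.lt_or_gt with h | h
  · rw [mul_comm]
    exact polyIntegral_realShiftedLegendre_mul_eq_zero (by simpa [degree_realShiftedLegendre])
  · exact polyIntegral_realShiftedLegendre_mul_eq_zero (by simpa [degree_realShiftedLegendre])

lemma polyIntegral_realShiftedLegendre_sq (n : ℕ) :
    (2 * n + 1) * polyIntegral 0 1 (realShiftedLegendre n ^ 2) = 1 := by
  -- Euler's operator preserves the leading term of `P` up to the factor `n`, so `X * P' - n * P` is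
  -- orthogonal to `P`, and `∫ P²` is read off from the boundary values of `X * P²`.
  set P := realShiftedLegendre n
  have degree_euler_lt : degree (X * derivative P - C (n : ℝ) * P) < n := by
    rw [degree_lt_iff_coeff_zero]
    intro k hk
    have hcoeff : (X * derivative P).coeff k = k * P.coeff k := by
      cases k <;> simp [coeff_X_mul, coeff_derivative, mul_comm]
    rw [coeff_sub, hcoeff, coeff_C_mul]
    rcases hk.eq_or_lt with rfl | hk
    · ring
    · rw [coeff_eq_zero_of_natDegree_lt (by rwa [natDegree_realShiftedLegendre])]
      ring
  have decomposition : derivative (X * P ^ 2) = (2 * n + 1 : ℝ) • P ^ 2 +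
      (2 : ℝ) • (P * (X * derivative P - C (n : ℝ) * P)) := by
    simp only [derivative_mul, derivative_X, one_mul, derivative_pow, Nat.cast_ofNat,
      Nat.add_one_sub_one, pow_one, smul_eq_C_mul, map_add, map_mul, map_natCast, map_one]
    ring
  have h := polyIntegral_derivative 0 1 (X * P ^ 2)
  rw [decomposition, map_add, map_smul, map_smul,
    polyIntegral_realShiftedLegendre_mul_eq_zero degree_euler_lt] at h
  simpa [P, eval_one_realShiftedLegendre, ← pow_mul, mul_comm n] using h

lemma polyIntegral_derivative_realShiftedLegendre_mul {n : ℕ} {q : ℝ[X]} (hq : q.natDegree ≤ n) :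
    polyIntegral 0 1 (derivative (realShiftedLegendre n) * q) =
      (-1) ^ n * q.eval 1 - q.eval 0 := by
  have hq' : (derivative q).degree < n := by
    rw [degree_lt_iff_coeff_zero]
    intro k hk
    rw [coeff_derivative, coeff_eq_zero_of_natDegree_lt (by lia), zero_mul]
  rw [polyIntegral_derivative_mul, polyIntegral_realShiftedLegendre_mul_eq_zero hq',
    eval_one_realShiftedLegendre, eval_zero_realShiftedLegendre]
  ring

/-- The polynomial representing evaluation at `0` in `L²(0, 1)` on polynomials of degree at
most `n`. Integrating by parts against the derivative of a Legendre polynomial leaves only boundary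
terms, and those at `1` cancel in the sum of two consecutive ones. -/
noncomputable def evalZeroKernel (n : ℕ) : ℝ[X] :=
  -(2⁻¹ : ℝ) • derivative (realShiftedLegendre n + realShiftedLegendre (n + 1))

lemma natDegree_evalZeroKernel_le (n : ℕ) : (evalZeroKernel n).natDegree ≤ n := by
  refine (natDegree_smul_le _ _).trans ((natDegree_derivative_le _).trans ?_)
  refine Nat.sub_le_of_le_add (natDegree_add_le_of_degree_le ?_ ?_) <;>
    simp [natDegree_realShiftedLegendre]

lemma eval_zero_evalZeroKernel (n : ℕ) : (evalZeroKernel n).eval 0 = (n + 1) ^ 2 := by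
  simp only [evalZeroKernel, derivative_add, eval_smul, eval_add, smul_eq_mul,
    eval_zero_derivative_realShiftedLegendre]
  push_cast
  ring

lemma polyIntegral_evalZeroKernel_mul {n : ℕ} {q : ℝ[X]} (hq : q.natDegree ≤ n) :
    polyIntegral 0 1 (evalZeroKernel n * q) = q.eval 0 := by
  rw [evalZeroKernel, smul_mul_assoc, map_smul, derivative_add, add_mul, map_add,
    polyIntegral_derivative_realShiftedLegendre_mul hq,
    polyIntegral_derivative_realShiftedLegendre_mul (hq.trans n.le_succ), smul_eq_mul, pow_succ]
  ring

lemma sq_eval_zero_le_mul_polyIntegral {n : ℕ} {p : ℝ[X]} (hp : p.natDegree ≤ n) :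
    p.eval 0 ^ 2 ≤ (n + 1) ^ 2 * polyIntegral 0 1 (p ^ 2) := by
  calc p.eval 0 ^ 2 = polyIntegral 0 1 (evalZeroKernel n * p) ^ 2 := by
        rw [polyIntegral_evalZeroKernel_mul hp]
    _ ≤ polyIntegral 0 1 (evalZeroKernel n ^ 2) * polyIntegral 0 1 (p ^ 2) :=
        polyIntegral_mul_sq_le zero_le_one _ _
    _ = (n + 1) ^ 2 * polyIntegral 0 1 (p ^ 2) := by
        rw [sq (evalZeroKernel n), polyIntegral_evalZeroKernel_mul (natDegree_evalZeroKernel_le n),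
          eval_zero_evalZeroKernel]

lemma mul_sq_eval_le_mul_polyIntegral {n : ℕ} {p : ℝ[X]} (hp : p.natDegree ≤ n) (a b : ℝ) :
    |b - a| * p.eval a ^ 2 ≤ (n + 1) ^ 2 * |polyIntegral a b (p ^ 2)| := by
  have hcomp : (p.comp (C (b - a) * X + C a)).natDegree ≤ n :=
    natDegree_comp_le.trans ((Nat.mul_le_mul hp natDegree_linear_le).trans (mul_one n).le)
  have h := sq_eval_zero_le_mul_polyIntegral hcomp
  rw [← mul_polyIntegral_comp a b, abs_mul, pow_comp]
  rw [abs_of_nonneg (polyIntegral_sq_nonneg zero_le_one _)]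
  simp only [eval_comp, eval_add, eval_mul, eval_C, eval_X, mul_zero, zero_add] at h
  linear_combination |b - a| * h

lemma sub_mul_sq_eval_le_mul_polyIntegral {n : ℕ} {p : ℝ[X]} (hp : p.natDegree ≤ n) {a b x : ℝ}
    (hx : x ∈ Set.Icc a b) :
    (b - a) * p.eval x ^ 2 ≤ (n + 1) ^ 2 * polyIntegral a b (p ^ 2) := by
  have hsymm : polyIntegral x a (p ^ 2) = -polyIntegral a x (p ^ 2) :=
    intervalIntegral.integral_symm _ _
  have hleft := mul_sq_eval_le_mul_polyIntegral hp x a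
  have hright := mul_sq_eval_le_mul_polyIntegral hp x b
  rw [hsymm, abs_neg, abs_of_nonneg (polyIntegral_sq_nonneg hx.1 p),
    abs_of_nonpos (sub_nonpos.mpr hx.1)] at hleft
  rw [abs_of_nonneg (polyIntegral_sq_nonneg hx.2 p), abs_of_nonneg (sub_nonneg.mpr hx.2)] at hright
  rw [← polyIntegral_add_adjacent a x b]
  linear_combination hleft + hright

/-! ### Orthonormal Legendre polynomials -/

/-- The uniform probability measure on `[-1, 1]`. -/
noncomputable def uniformInterval : Measure ℝ :=
  (2 : ENNReal)⁻¹ • volume.restrict (Set.Icc (-1 : ℝ) 1)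

lemma uniformInterval_Icc : uniformInterval (Set.Icc (-1) 1) = 1 := by
  rw [uniformInterval, Measure.smul_apply, Measure.restrict_apply_self, Real.volume_Icc]
  norm_num [ENNReal.inv_mul_cancel]

instance : IsProbabilityMeasure uniformInterval where
  measure_univ := by
    rw [← uniformInterval_Icc]
    simp only [uniformInterval, Measure.smul_apply, Measure.restrict_apply_univ,
      Measure.restrict_apply_self]

lemma integrable_eval_uniformInterval (p : ℝ[X]) :
    Integrable (fun x => p.eval x) uniformInterval :=
  p.continuous.continuousOn.integrableOn_Icc.smul_measure (by simp)

lemma integral_eval_uniformInterval (p : ℝ[X]) :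
    ∫ x, p.eval x ∂uniformInterval = 2⁻¹ * polyIntegral (-1) 1 p := by
  rw [uniformInterval, integral_smul_measure, polyIntegral_apply,
    intervalIntegral.integral_of_le (by norm_num), integral_Icc_eq_integral_Ioc]
  simp

lemma integral_eval_comp_uniformInterval (p : ℝ[X]) :
    ∫ x, (p.comp (C 2⁻¹ * X + C 2⁻¹)).eval x ∂uniformInterval = polyIntegral 0 1 p := by
  rw [integral_eval_uniformInterval, ← mul_polyIntegral_comp (-1) 1, comp_assoc]
  have inverse : (C (2⁻¹ : ℝ) * X + C 2⁻¹).comp (C (1 - -1) * X + C (-1)) = X := by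
    simp only [add_comp, mul_comp, C_comp, X_comp, mul_add, ← mul_assoc, ← C_mul, add_assoc,
      ← C_add]
    norm_num
  rw [inverse, comp_X]
  ring

lemma sq_eval_le_mul_integral_uniformInterval {n : ℕ} {p : ℝ[X]} (hp : p.natDegree ≤ n) {x : ℝ}
    (hx : x ∈ Set.Icc (-1) 1) :
    p.eval x ^ 2 ≤ (n + 1) ^ 2 * ∫ t, p.eval t ^ 2 ∂uniformInterval := by
  have h := sub_mul_sq_eval_le_mul_polyIntegral hp hx
  simp_rw [← eval_pow, integral_eval_uniformInterval]
  rw [eval_pow]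
  linear_combination h / 2

/-- The Legendre polynomials, normalized to be orthonormal in `L²(uniformInterval)`. -/
noncomputable def orthonormalLegendre : Polynomial.Sequence ℝ where
  elems' n := C √(2 * n + 1) * (realShiftedLegendre n).comp (C 2⁻¹ * X + C 2⁻¹)
  degree_eq' n := by
    have degree_affine : (C (2⁻¹ : ℝ) * X + C 2⁻¹).degree = 1 := degree_linear (by norm_num)
    rw [degree_C_mul (by positivity), degree_comp (by rw [degree_affine]; exact zero_lt_one),
      degree_affine, degree_realShiftedLegendre, mul_one]

lemma orthonormalLegendre_apply (n : ℕ) : orthonormalLegendre n =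
    C √(2 * n + 1) * (realShiftedLegendre n).comp (C 2⁻¹ * X + C 2⁻¹) := rfl

lemma integral_orthonormalLegendre_mul (m n : ℕ) :
    ∫ x, (orthonormalLegendre m).eval x * (orthonormalLegendre n).eval x ∂uniformInterval =
      if m = n then 1 else 0 := by
  have reduction : ∫ x, (orthonormalLegendre m).eval x * (orthonormalLegendre n).eval x
        ∂uniformInterval = √(2 * m + 1) * √(2 * n + 1) *
      polyIntegral 0 1 (realShiftedLegendre m * realShiftedLegendre n) := by
    simp only [← integral_eval_comp_uniformInterval, ← integral_const_mul,
      orthonormalLegendre_apply, mul_comp, eval_mul, eval_C]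
    congr! 2
    ring
  rw [reduction]
  split_ifs with h
  · rw [h, Real.mul_self_sqrt (by positivity), ← sq, polyIntegral_realShiftedLegendre_sq]
  · rw [polyIntegral_realShiftedLegendre_mul_of_ne h, mul_zero]

section OrthonormalFamily

variable {α ι : Type*} [MeasurableSpace α] [DecidableEq ι] {μ : Measure α} {L : ι → α → ℝ}

lemma integral_sum_mul_sq_of_orthonormal (hint : ∀ i j, Integrable (fun x => L i x * L j x) μ)
    (horth : ∀ i j, ∫ x, L i x * L j x ∂μ = if i = j then 1 else 0) (s : Finset ι) (c : ι → ℝ) :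
    ∫ x, (∑ i ∈ s, c i * L i x) ^ 2 ∂μ = ∑ i ∈ s, c i ^ 2 := by
  have expand : ∀ x, (∑ i ∈ s, c i * L i x) ^ 2 =
      ∑ i ∈ s, ∑ j ∈ s, c i * c j * (L i x * L j x) := fun x => by
    simp_rw [sq, Finset.sum_mul_sum, mul_mul_mul_comm]
  simp_rw [expand]
  rw [integral_finsetSum _ fun i _ => integrable_finsetSum _ fun j _ => (hint i j).const_mul _]
  refine Finset.sum_congr rfl fun i hi => ?_
  rw [integral_finsetSum _ fun j _ => (hint i j).const_mul _]
  simp_rw [integral_const_mul, horth, mul_ite, mul_one, mul_zero, Finset.sum_ite_eq, if_pos hi, sq]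

lemma sq_sum_mul_le_of_orthonormal (hint : ∀ i j, Integrable (fun x => L i x * L j x) μ)
    (horth : ∀ i j, ∫ x, L i x * L j x ∂μ = if i = j then 1 else 0) (s : Finset ι) (c : ι → ℝ)
    (x₀ : α) :
    (∑ i ∈ s, c i * L i x₀) ^ 2 ≤
      (∑ i ∈ s, L i x₀ ^ 2) * ∫ x, (∑ i ∈ s, c i * L i x) ^ 2 ∂μ := by
  rw [integral_sum_mul_sq_of_orthonormal hint horth, mul_comm]
  exact Finset.sum_mul_sq_le_sq_mul_sq _ _ _

lemma sum_sq_le_of_orthonormal (hint : ∀ i j, Integrable (fun x => L i x * L j x) μ)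
    (horth : ∀ i j, ∫ x, L i x * L j x ∂μ = if i = j then 1 else 0) (s : Finset ι) {x₀ : α} {K : ℝ}
    (hK : 0 ≤ K)
    (heval : ∀ c : ι → ℝ,
      (∑ i ∈ s, c i * L i x₀) ^ 2 ≤ K * ∫ x, (∑ i ∈ s, c i * L i x) ^ 2 ∂μ) :
    ∑ i ∈ s, L i x₀ ^ 2 ≤ K := by
  have h := heval fun i => L i x₀
  rw [integral_sum_mul_sq_of_orthonormal hint horth] at h
  simp_rw [← sq] at h
  rw [sq] at h
  by_contra! hlt
  exact hlt.not_ge (le_of_mul_le_mul_right h (hK.trans_lt hlt))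

end OrthonormalFamily

lemma sum_sq_eval_orthonormalLegendre_le (n : ℕ) {x : ℝ} (hx : x ∈ Set.Icc (-1) 1) :
    ∑ k ∈ Finset.range n, (orthonormalLegendre k).eval x ^ 2 ≤ (n : ℝ) ^ 2 := by
  rcases n with _ | n
  · simp
  refine sum_sq_le_of_orthonormal
    (fun i j => by simpa only [eval_mul] using
      integrable_eval_uniformInterval (orthonormalLegendre i * orthonormalLegendre j))
    integral_orthonormalLegendre_mul _ (by positivity) fun c => ?_
  let p : ℝ[X] := ∑ k ∈ Finset.range (n + 1), C (c k) * orthonormalLegendre k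
  have hp : p.natDegree ≤ n := natDegree_sum_le_of_forall_le _ _ fun k hk => by
    simpa using (natDegree_C_mul_le _ _).trans (by simpa [Nat.lt_succ_iff] using hk)
  simpa [p, eval_finsetSum] using sq_eval_le_mul_integral_uniformInterval hp hx

/-- The products `y ↦ ∏ j, l_{ν j}(y j)` of the orthonormal Legendre polynomials `l_k`, an
orthonormal family in `L²(uniformCube d)`. -/
noncomputable def tensorLegendre {d : ℕ} (ν : Fin d → ℕ) (y : Fin d → ℝ) : ℝ :=
  ∏ j, (orthonormalLegendre (ν j)).eval (y j)

lemma continuous_tensorLegendre {d : ℕ} (ν : Fin d → ℕ) : Continuous (tensorLegendre ν) :=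
  continuous_finsetProd _ fun j _ =>
    (orthonormalLegendre (ν j)).continuous.comp (continuous_apply j)

lemma uniformCube_eq_pi (d : ℕ) : uniformCube d = Measure.pi fun _ => uniformInterval := rfl

instance (d : ℕ) : IsProbabilityMeasure (uniformCube d) := by
  rw [uniformCube_eq_pi]
  infer_instance

lemma isCompact_cube (d : ℕ) : IsCompact (cube d) :=
  isCompact_univ_pi fun _ => isCompact_Icc

lemma ae_mem_cube (d : ℕ) : ∀ᵐ y ∂uniformCube d, y ∈ cube d := by
  refine (mem_ae_iff_prob_eq_one (isCompact_cube d).measurableSet).mpr ?_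
  rw [uniformCube_eq_pi, cube, Measure.pi_pi]
  simp only [uniformInterval_Icc, Finset.prod_const_one]

lemma integrable_uniformCube_of_continuous {d : ℕ} {f : (Fin d → ℝ) → ℝ} (hf : Continuous f) :
    Integrable f (uniformCube d) := by
  obtain ⟨C, hC⟩ := (isCompact_cube d).exists_bound_of_continuousOn hf.continuousOn
  exact Integrable.of_bound hf.aestronglyMeasurable C ((ae_mem_cube d).mono hC)

lemma integral_tensorLegendre_mul {d : ℕ} (ν μ : Fin d → ℕ) :
    ∫ y, tensorLegendre ν y * tensorLegendre μ y ∂uniformCube d = if ν = μ then 1 else 0 := by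
  simp only [tensorLegendre, ← Finset.prod_mul_distrib]
  rw [uniformCube_eq_pi, integral_fintype_prod_eq_prod
    (fun j x => (orthonormalLegendre (ν j)).eval x * (orthonormalLegendre (μ j)).eval x)]
  simp_rw [integral_orthonormalLegendre_mul, Finset.prod_boole, funext_iff, Finset.mem_univ,
    true_imp_iff]

/-! ### Downward closed sets -/

-- The second term on the left is the boundary term of a summation by parts; it makes the inequality
-- inductive.
lemma sum_mul_sq_add_le_sq_sum_of_antitone {w m : ℕ → ℝ}
    (hw : ∀ n, ∑ k ∈ Finset.range n, w k ≤ (n : ℝ) ^ 2) (hm_nonneg : ∀ k, 0 ≤ m k)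
    (hm : Antitone m) (n : ℕ) :
    ∑ k ∈ Finset.range n, w k * m k ^ 2 + ((n : ℝ) ^ 2 - ∑ k ∈ Finset.range n, w k) * m n ^ 2 ≤
      (∑ k ∈ Finset.range n, m k) ^ 2 := by
  induction n with
  | zero => simp
  | succ n ih =>
    have defect_nonneg := sub_nonneg.mpr (hw (n + 1))
    have sq_le : m (n + 1) ^ 2 ≤ m n ^ 2 := pow_le_pow_left₀ (hm_nonneg _) (hm n.le_succ) 2
    have mul_le_sum : n * m n ≤ ∑ k ∈ Finset.range n, m k := by
      simpa using Finset.card_nsmul_le_sum (Finset.range n) m (m n)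
        fun k hk => hm (Finset.mem_range.mp hk).le
    simp only [Finset.sum_range_succ] at defect_nonneg ⊢
    push_cast at defect_nonneg ⊢
    linear_combination ih + mul_le_mul_of_nonneg_left sq_le defect_nonneg +
      2 * mul_le_mul_of_nonneg_right mul_le_sum (hm_nonneg n)

lemma sum_mul_sq_le_sq_sum_of_antitone {w m : ℕ → ℝ}
    (hw : ∀ n, ∑ k ∈ Finset.range n, w k ≤ (n : ℝ) ^ 2) (hm_nonneg : ∀ k, 0 ≤ m k)
    (hm : Antitone m) (n : ℕ) :
    ∑ k ∈ Finset.range n, w k * m k ^ 2 ≤ (∑ k ∈ Finset.range n, m k) ^ 2 :=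
  (le_add_of_nonneg_right (mul_nonneg (sub_nonneg.mpr (hw n)) (sq_nonneg _))).trans
    (sum_mul_sq_add_le_sq_sum_of_antitone hw hm_nonneg hm n)

/-- The section of `Λ ⊂ ℕ^(d+1)` over the value `k` of the first coordinate. -/
noncomputable def slice {d : ℕ} (Λ : Finset (Fin (d + 1) → ℕ)) (k : ℕ) : Finset (Fin d → ℕ) :=
  Λ.preimage (fun μ => (Fin.cons k μ : Fin (d + 1) → ℕ))
    (Fin.cons_right_injective (α := fun _ => ℕ) k).injOn

lemma mem_slice {d : ℕ} {Λ : Finset (Fin (d + 1) → ℕ)} {k : ℕ} {μ : Fin d → ℕ} :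
    μ ∈ slice Λ k ↔ (Fin.cons k μ : Fin (d + 1) → ℕ) ∈ Λ :=
  Finset.mem_preimage

lemma sum_eq_sum_slice {d B : ℕ} {β : Type*} [AddCommMonoid β] {Λ : Finset (Fin (d + 1) → ℕ)}
    (hB : ∀ ν ∈ Λ, ν 0 < B) (f : (Fin (d + 1) → ℕ) → β) :
    ∑ ν ∈ Λ, f ν = ∑ k ∈ Finset.range B, ∑ μ ∈ slice Λ k, f (Fin.cons k μ) := by
  rw [Finset.sum_sigma']
  refine Finset.sum_nbij' (fun ν => ⟨ν 0, Fin.tail ν⟩) (fun x => Fin.cons x.1 x.2)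
      ?_ ?_ ?_ ?_ ?_ <;>
    simp +contextual [mem_slice, hB]

lemma downwardClosed_slice {d : ℕ} {Λ : Finset (Fin (d + 1) → ℕ)} (hΛ : DownwardClosed Λ)
    (k : ℕ) : DownwardClosed (slice Λ k) := fun ν hν μ hμ => by
  rw [mem_slice] at hν ⊢
  exact hΛ _ hν _ (Fin.cons_le_cons.mpr ⟨le_rfl, hμ⟩)

lemma antitone_slice {d : ℕ} {Λ : Finset (Fin (d + 1) → ℕ)} (hΛ : DownwardClosed Λ) :
    Antitone (slice Λ) := fun k l hkl μ hμ => by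
  rw [mem_slice] at hμ ⊢
  exact hΛ _ hμ _ (Fin.cons_le_cons.mpr ⟨hkl, le_rfl⟩)

lemma sum_prod_le_card_sq_of_downwardClosed {d : ℕ} {Λ : Finset (Fin d → ℕ)}
    (hΛ : DownwardClosed Λ) {w : Fin d → ℕ → ℝ} (hw_nonneg : ∀ j k, 0 ≤ w j k)
    (hw : ∀ j n, ∑ k ∈ Finset.range n, w j k ≤ (n : ℝ) ^ 2) :
    ∑ ν ∈ Λ, ∏ j, w j (ν j) ≤ (Λ.card : ℝ) ^ 2 := by
  induction d with
  | zero =>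
    simp only [Finset.univ_eq_empty, Finset.prod_empty, Finset.sum_const, nsmul_eq_mul, mul_one]
    exact_mod_cast Nat.le_self_pow two_ne_zero _
  | succ d ih =>
    obtain ⟨B, hB⟩ : ∃ B, ∀ ν ∈ Λ, ν 0 < B :=
      ⟨Λ.sup (fun ν => ν 0) + 1, fun ν hν =>
        Nat.lt_succ_of_le (Finset.le_sup (f := fun ν : Fin (d + 1) → ℕ => ν 0) hν)⟩
    have card_antitone : Antitone fun k => ((slice Λ k).card : ℝ) := fun k l hkl =>
      Nat.cast_le.mpr (Finset.card_le_card (antitone_slice hΛ hkl))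
    calc ∑ ν ∈ Λ, ∏ j, w j (ν j)
        = ∑ k ∈ Finset.range B, w 0 k * ∑ μ ∈ slice Λ k, ∏ j, w (Fin.succ j) (μ j) := by
          simp_rw [sum_eq_sum_slice hB, Fin.prod_univ_succ, Fin.cons_zero, Fin.cons_succ,
            Finset.mul_sum]
      _ ≤ ∑ k ∈ Finset.range B, w 0 k * ((slice Λ k).card : ℝ) ^ 2 := by
          gcongr with k
          · exact hw_nonneg 0 k
          · exact ih (downwardClosed_slice hΛ k) (fun j => hw_nonneg j.succ) fun j => hw j.succ
      _ ≤ (∑ k ∈ Finset.range B, ((slice Λ k).card : ℝ)) ^ 2 :=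
          sum_mul_sq_le_sq_sum_of_antitone (hw 0) (fun _ => Nat.cast_nonneg _) card_antitone B
      _ = (Λ.card : ℝ) ^ 2 := by
          simp only [Finset.card_eq_sum_ones, sum_eq_sum_slice hB, Nat.cast_sum]

lemma exists_downwardClosed_card_eq {d : ℕ} (hd : 0 < d) (m : ℕ) :
    ∃ Λ : Finset (Fin d → ℕ), DownwardClosed Λ ∧ Λ.card = m := by
  refine ⟨(Finset.range m).image (Pi.single ⟨0, hd⟩), ?_, ?_⟩
  · intro ν hν μ hμν
    obtain ⟨k, hk, rfl⟩ := Finset.mem_image.mp hν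
    refine Finset.mem_image.mpr ⟨μ ⟨0, hd⟩, ?_, ?_⟩
    · have hμ : μ ⟨0, hd⟩ ≤ k := by simpa using hμν ⟨0, hd⟩
      exact Finset.mem_range.mpr (hμ.trans_lt (Finset.mem_range.mp hk))
    · ext j
      rcases eq_or_ne j ⟨0, hd⟩ with rfl | hj
      · exact Pi.single_eq_same _ _
      · have hμ : μ j ≤ 0 := by simpa [hj] using hμν j
        rw [Pi.single_eq_of_ne hj, Nat.le_zero.mp hμ]
  · rw [Finset.card_image_of_injective _ (Pi.single_injective _), Finset.card_range]

/-! ### Polynomials supported on a downward closed set -/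

lemma sum_sq_tensorLegendre_le {d : ℕ} {Λ : Finset (Fin d → ℕ)} (hΛ : DownwardClosed Λ)
    {y : Fin d → ℝ} (hy : y ∈ cube d) :
    ∑ ν ∈ Λ, tensorLegendre ν y ^ 2 ≤ (Λ.card : ℝ) ^ 2 := by
  simp only [tensorLegendre, ← Finset.prod_pow]
  exact sum_prod_le_card_sq_of_downwardClosed hΛ
    (w := fun j k => (orthonormalLegendre k).eval (y j) ^ 2) (fun _ _ => sq_nonneg _) fun j n =>
      sum_sq_eval_orthonormalLegendre_le n (hy j (Set.mem_univ j))

lemma exists_sum_smul_eq_of_mem_span_image {ι R E : Type*} [Semiring R] [AddCommMonoid E]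
    [Module R E] {v : ι → E} {s : Finset ι} {x : E} (hx : x ∈ Submodule.span R (v '' s)) :
    ∃ c : ι → R, ∑ i ∈ s, c i • v i = x := by
  obtain ⟨c, hc, rfl⟩ := (Finsupp.mem_span_image_iff_linearCombination R).mp hx
  exact ⟨c, (Finsupp.linearCombination_apply_of_mem_supported R hc).symm⟩

lemma exists_sum_mul_eval_orthonormalLegendre_eq_pow (n : ℕ) :
    ∃ c : ℕ → ℝ, ∀ x : ℝ,
      ∑ k ∈ Finset.range (n + 1), c k * (orthonormalLegendre k).eval x = x ^ n := by
  have hmem : (X ^ n : ℝ[X]) ∈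
      Submodule.span ℝ ((orthonormalLegendre ·) '' (Finset.range (n + 1) : Set ℕ)) := by
    rw [Finset.coe_range, Set.Iio_add_one_eq_Iic, orthonormalLegendre.span_degreeLE fun i _ =>
      (leadingCoeff_ne_zero.mpr (orthonormalLegendre.ne_zero i)).isUnit]
    exact mem_degreeLE.mpr (degree_X_pow_le n)
  obtain ⟨c, hc⟩ := exists_sum_smul_eq_of_mem_span_image hmem
  exact ⟨c, fun x => by simpa [eval_finsetSum] using congrArg (eval x) hc⟩

lemma monomial_mem_span_tensorLegendre {d : ℕ} {Λ : Finset (Fin d → ℕ)} (hΛ : DownwardClosed Λ)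
    {ν : Fin d → ℕ} (hν : ν ∈ Λ) :
    (fun y : Fin d → ℝ => ∏ j, y j ^ ν j) ∈ Submodule.span ℝ (tensorLegendre '' (Λ : Set _)) := by
  choose c hc using exists_sum_mul_eval_orthonormalLegendre_eq_pow
  have expansion : (fun y : Fin d → ℝ => ∏ j, y j ^ ν j) =
      ∑ μ ∈ Fintype.piFinset fun j => Finset.range (ν j + 1),
        (∏ j, c (ν j) (μ j)) • tensorLegendre μ := by
    ext y
    simp_rw [← hc, Finset.prod_univ_sum, Finset.prod_mul_distrib, Finset.sum_apply, Pi.smul_apply,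
      smul_eq_mul, tensorLegendre]
  rw [expansion]
  refine Submodule.sum_smul_mem _ _ fun μ hμ =>
    Submodule.subset_span ⟨μ, hΛ ν hν μ fun j => ?_, rfl⟩
  exact Nat.lt_succ_iff.mp (Finset.mem_range.mp (Fintype.mem_piFinset.mp hμ j))

lemma exists_polyEval_eq_sum_tensorLegendre {d : ℕ} {Λ : Finset (Fin d → ℕ)}
    (hΛ : DownwardClosed Λ) (a : (Fin d → ℕ) → ℝ) :
    ∃ c : (Fin d → ℕ) → ℝ, ∀ y, polyEval Λ a y = ∑ ν ∈ Λ, c ν * tensorLegendre ν y := by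
  have hmem : polyEval Λ a ∈ Submodule.span ℝ (tensorLegendre '' (Λ : Set _)) := by
    have h : polyEval Λ a = ∑ ν ∈ Λ, a ν • fun y : Fin d → ℝ => ∏ j, y j ^ ν j := by
      ext y
      simp only [polyEval, Finset.sum_apply, Pi.smul_apply, smul_eq_mul, mul_comm]
    rw [h]
    exact Submodule.sum_smul_mem _ _ fun ν hν => monomial_mem_span_tensorLegendre hΛ hν
  obtain ⟨c, hc⟩ := exists_sum_smul_eq_of_mem_span_image hmem
  exact ⟨c, fun y => by simp [← hc]⟩

lemma sq_polyEval_le {d : ℕ} {Λ : Finset (Fin d → ℕ)} (hΛ : DownwardClosed Λ)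
    (a : (Fin d → ℕ) → ℝ) {y₀ : Fin d → ℝ} (hy₀ : y₀ ∈ cube d) :
    polyEval Λ a y₀ ^ 2 ≤ (Λ.card : ℝ) ^ 2 * ∫ y, polyEval Λ a y ^ 2 ∂uniformCube d := by
  obtain ⟨c, hc⟩ := exists_polyEval_eq_sum_tensorLegendre hΛ a
  simp_rw [hc]
  have hint : ∀ ν μ, Integrable (fun y => tensorLegendre ν y * tensorLegendre μ y)
      (uniformCube d) := fun ν μ =>
    integrable_uniformCube_of_continuous
      ((continuous_tensorLegendre ν).mul (continuous_tensorLegendre μ))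
  have sq_integral_nonneg : 0 ≤ ∫ y, (∑ ν ∈ Λ, c ν * tensorLegendre ν y) ^ 2 ∂uniformCube d :=
    integral_nonneg fun y => sq_nonneg _
  exact (sq_sum_mul_le_of_orthonormal hint integral_tensorLegendre_mul Λ c y₀).trans
    (mul_le_mul_of_nonneg_right (sum_sq_tensorLegendre_le hΛ hy₀) sq_integral_nonneg)

@[fun_prop]
lemma continuous_polyEval {d : ℕ} {V : Type*} [NormedAddCommGroup V] [NormedSpace ℝ V]
    (Λ : Finset (Fin d → ℕ)) (a : (Fin d → ℕ) → V) : Continuous (polyEval Λ a) := by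
  unfold polyEval
  fun_prop

lemma norm_sq_polyEval_le {d : ℕ} {V : Type*} [NormedAddCommGroup V] [NormedSpace ℝ V]
    {Λ : Finset (Fin d → ℕ)} (hΛ : DownwardClosed Λ) (a : (Fin d → ℕ) → V) {y₀ : Fin d → ℝ}
    (hy₀ : y₀ ∈ cube d) :
    ‖polyEval Λ a y₀‖ ^ 2 ≤ (Λ.card : ℝ) ^ 2 * ∫ y, ‖polyEval Λ a y‖ ^ 2 ∂uniformCube d := by
  obtain ⟨g, hg, hgy₀⟩ := exists_dual_vector'' ℝ (polyEval Λ a y₀)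
  have polyEval_comp : ∀ y, polyEval Λ (fun ν => g (a ν)) y = g (polyEval Λ a y) := fun y => by
    simp only [polyEval, map_sum, map_smul]
  have sq_le : ∀ y, g (polyEval Λ a y) ^ 2 ≤ ‖polyEval Λ a y‖ ^ 2 := fun y =>
    sq_le_sq.mpr (by simpa using g.le_of_opNorm_le hg (polyEval Λ a y))
  calc ‖polyEval Λ a y₀‖ ^ 2 = g (polyEval Λ a y₀) ^ 2 := by rw [hgy₀, RCLike.ofReal_real_eq_id, id]
    _ ≤ (Λ.card : ℝ) ^ 2 * ∫ y, g (polyEval Λ a y) ^ 2 ∂uniformCube d := by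
        simpa only [polyEval_comp] using sq_polyEval_le hΛ (fun ν => g (a ν)) hy₀
    _ ≤ (Λ.card : ℝ) ^ 2 * ∫ y, ‖polyEval Λ a y‖ ^ 2 ∂uniformCube d :=
        mul_le_mul_of_nonneg_left
          (integral_mono (integrable_uniformCube_of_continuous (by fun_prop))
            (integrable_uniformCube_of_continuous (by fun_prop)) sq_le) (sq_nonneg _)

/-! ### Sampling -/

section Probability

variable {α : Type*} [MeasurableSpace α] {μ : Measure α} [IsProbabilityMeasure μ]

lemma integral_le_add_mul_measureReal {f : α → ℝ} {C θ : ℝ} (hf : Integrable f μ)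
    (hfC : ∀ᵐ x ∂μ, f x ≤ C) (hθ : 0 ≤ θ) :
    ∫ x, f x ∂μ ≤ θ + C * μ.real {x | θ ≤ f x} := by
  have hE : NullMeasurableSet {x | θ ≤ f x} μ :=
    nullMeasurableSet_le aemeasurable_const hf.aemeasurable
  have hint : Integrable ({x | θ ≤ f x}.indicator fun _ => C) μ :=
    (integrable_const C).indicator₀ hE
  calc ∫ x, f x ∂μ ≤ ∫ x, (θ + {x | θ ≤ f x}.indicator (fun _ => C) x) ∂μ := by
        refine integral_mono_ae hf ((integrable_const θ).add hint) ?_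
        filter_upwards [hfC] with x hx
        simp only [Set.indicator_apply, Set.mem_ofPred_eq]
        split_ifs with h
        · exact hx.trans (le_add_of_nonneg_left hθ)
        · exact (not_le.mp h).le.trans (add_zero θ).ge
    _ = θ + C * μ.real {x | θ ≤ f x} := by
        rw [integral_add (integrable_const θ) hint, integral_indicator₀ hE, setIntegral_const,
          integral_const, probReal_univ, one_smul, smul_eq_mul, mul_comm C]

lemma measureReal_pi_exists_mem (ι : Type*) [Fintype ι] {E : Set α} (hE : MeasurableSet E) :
    (Measure.pi fun _ : ι => μ).real {x | ∃ i, x i ∈ E} =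
      1 - (1 - μ.real E) ^ Fintype.card ι := by
  have compl_eq : {x : ι → α | ∃ i, x i ∈ E}ᶜ = Set.univ.pi fun _ => Eᶜ := by
    ext x
    simp
  have measurable : MeasurableSet {x : ι → α | ∃ i, x i ∈ E} := by
    rw [← MeasurableSet.compl_iff, compl_eq]
    exact MeasurableSet.univ_pi fun _ => hE.compl
  rw [← probReal_compl_eq_one_sub hE, eq_sub_iff_add_eq, ← eq_sub_iff_add_eq',
    ← probReal_compl_eq_one_sub measurable, compl_eq]
  simp only [measureReal_def, Measure.pi_pi, Finset.prod_const, Finset.card_univ,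
    ENNReal.toReal_pow]

end Probability

lemma three_div_le_measureReal_norm_polyEval {d : ℕ} {V : Type*} [NormedAddCommGroup V]
    [NormedSpace ℝ V] {Λ : Finset (Fin d → ℕ)} (hΛ : DownwardClosed Λ) {a : (Fin d → ℕ) → V}
    {y₀ : Fin d → ℝ} (hy₀ : y₀ ∈ cube d) (hmax : IsMaxOn (fun y => ‖polyEval Λ a y‖) (cube d) y₀)
    (hpos : 0 < ‖polyEval Λ a y₀‖) :
    3 / (4 * (Λ.card : ℝ) ^ 2) ≤
      (uniformCube d).real {y | ‖polyEval Λ a y₀‖ / (2 * Λ.card) ≤ ‖polyEval Λ a y‖} := by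
  set B := ‖polyEval Λ a y₀‖
  rcases Nat.eq_zero_or_pos Λ.card with hcard | hcard
  · simp [hcard]
  have sq_le_iff : ∀ y, (B / (2 * Λ.card)) ^ 2 ≤ ‖polyEval Λ a y‖ ^ 2 ↔
      B / (2 * Λ.card) ≤ ‖polyEval Λ a y‖ := fun y =>
    sq_le_sq₀ (by positivity) (norm_nonneg _)
  have markov := integral_le_add_mul_measureReal (μ := uniformCube d)
    (f := fun y => ‖polyEval Λ a y‖ ^ 2) (C := B ^ 2)
    (integrable_uniformCube_of_continuous ((continuous_polyEval Λ a).norm.pow 2))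
    ((ae_mem_cube d).mono fun y hy => pow_le_pow_left₀ (norm_nonneg _) (hmax hy) 2)
    (sq_nonneg (B / (2 * Λ.card)))
  simp_rw [sq_le_iff] at markov
  set e := (uniformCube d).real {y | B / (2 * Λ.card) ≤ ‖polyEval Λ a y‖}
  have h : B ^ 2 * 1 ≤ B ^ 2 * (1 / 4 + Λ.card ^ 2 * e) :=
    calc B ^ 2 * 1 = B ^ 2 := mul_one _
      _ ≤ Λ.card ^ 2 * ((B / (2 * Λ.card)) ^ 2 + B ^ 2 * e) :=
        (norm_sq_polyEval_le hΛ a hy₀).trans (by gcongr)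
      _ = B ^ 2 * (1 / 4 + Λ.card ^ 2 * e) := by
        field_simp
        ring
  rw [div_le_iff₀ (by positivity)]
  linear_combination 4 * le_of_mul_le_mul_left h (by positivity)

lemma le_biSup_of_forall_le {α : Type*} {s : Set α} {f : α → ℝ} {C : ℝ} (hf : ∀ x ∈ s, f x ≤ C)
    {x : α} (hx : x ∈ s) : f x ≤ ⨆ y ∈ s, f y := by
  refine le_ciSup₂ (f := fun y (_ : y ∈ s) => f y) ⟨C, ?_⟩ x hx
  rintro _ ⟨_, ⟨y, rfl⟩, ⟨hy, rfl⟩⟩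
  exact hf y hy

lemma le_biSup_of_biSup_pos {α : Type*} {s : Set α} {f : α → ℝ} (hpos : 0 < ⨆ y ∈ s, f y)
    {x : α} (hx : x ∈ s) : f x ≤ ⨆ y ∈ s, f y := by
  have hbdd : BddAbove (Set.range fun y => ⨆ (_ : y ∈ s), f y) := by
    by_contra h
    exact hpos.ne' (Real.iSup_of_not_bddAbove h)
  simpa [hx] using le_ciSup hbdd x

lemma exists_norm_sub_polyEval_lt_of_deltaApprox_lt {d : ℕ} (hd : 0 < d) {V : Type*}
    [NormedAddCommGroup V] [NormedSpace ℝ V] {v : (Fin d → ℝ) → V} {C : ℝ}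
    (hv : ∀ y ∈ cube d, ‖v y‖ ≤ C) {m : ℕ} {ε : ℝ} (hε : deltaApprox v m < ε) :
    ∃ (Λ : Finset (Fin d → ℕ)) (a : (Fin d → ℕ) → V), DownwardClosed Λ ∧ Λ.card = m ∧
      ∀ y ∈ cube d, ‖v y - polyEval Λ a y‖ < ε := by
  obtain ⟨Λ₀, hΛ₀, hcard₀⟩ := exists_downwardClosed_card_eq hd m
  obtain ⟨_, ⟨Λ, a, hΛ, hcard, rfl⟩, hlt⟩ :=
    exists_lt_of_csInf_lt (by exact ⟨_, Λ₀, 0, hΛ₀, hcard₀, rfl⟩) hε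
  refine ⟨Λ, a, hΛ, hcard, fun y hy => lt_of_le_of_lt ?_ hlt⟩
  obtain ⟨C', hC'⟩ := (isCompact_cube d).exists_bound_of_continuousOn
    (continuous_polyEval Λ a).continuousOn
  exact le_biSup_of_forall_le (f := fun y => ‖v y - polyEval Λ a y‖) (C := C + C')
    (fun z hz => (norm_sub_le _ _).trans (add_le_add (hv z hz) (hC' z hz))) hy

lemma exists_measurableSet_div_le_norm {d : ℕ} (hd : 0 < d) {V : Type*} [NormedAddCommGroup V]
    [NormedSpace ℝ V] {v : (Fin d → ℝ) → V} {M : ℝ} (hM : M = ⨆ y ∈ cube d, ‖v y‖)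
    (hMpos : 0 < M) {m : ℕ} (hm : 1 ≤ m) (hδ : deltaApprox v m < M / (4 * m)) :
    ∃ E : Set (Fin d → ℝ), MeasurableSet E ∧ 3 / (4 * (m : ℝ) ^ 2) ≤ (uniformCube d).real E ∧
      ∀ y ∈ E, y ∈ cube d → M / (8 * m) ≤ ‖v y‖ := by
  have hvM : ∀ y ∈ cube d, ‖v y‖ ≤ M := fun y hy => by
    rw [hM] at hMpos ⊢
    exact le_biSup_of_biSup_pos hMpos hy
  obtain ⟨Λ, a, hΛ, rfl, happrox⟩ := exists_norm_sub_polyEval_lt_of_deltaApprox_lt hd hvM hδ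
  have cube_nonempty : (cube d).Nonempty := ⟨0, fun _ _ => by simp⟩
  obtain ⟨y₀, hy₀, hmax⟩ := (isCompact_cube d).exists_isMaxOn cube_nonempty
    (continuous_polyEval Λ a).norm.continuousOn
  have card_ge_one : (1 : ℝ) ≤ Λ.card := Nat.one_le_cast.mpr hm
  have norm_max_ge : 3 / 4 * M ≤ ‖polyEval Λ a y₀‖ := by
    have sup_le : M ≤ ‖polyEval Λ a y₀‖ + M / (4 * Λ.card) := by
      have hnonneg : 0 ≤ ‖polyEval Λ a y₀‖ + M / (4 * Λ.card) := by positivity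
      refine hM.trans_le (Real.iSup_le (fun y => Real.iSup_le (fun hy => ?_) hnonneg) hnonneg)
      exact (norm_le_norm_add_norm_sub' _ _).trans (add_le_add (hmax hy) (happrox y hy).le)
    have error_le : M / (4 * Λ.card) ≤ M / 4 :=
      div_le_div_of_nonneg_left hMpos.le four_pos (le_mul_of_one_le_right four_pos.le card_ge_one)
    linarith
  refine ⟨{y | ‖polyEval Λ a y₀‖ / (2 * Λ.card) ≤ ‖polyEval Λ a y‖},
    (isClosed_le continuous_const (continuous_polyEval Λ a).norm).measurableSet,
    three_div_le_measureReal_norm_polyEval hΛ hy₀ hmax (by linarith), fun y hyE hy => ?_⟩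
  calc M / (8 * Λ.card) = 3 / 4 * M / (2 * Λ.card) - M / (4 * Λ.card) := by
        field_simp
        norm_num
    _ ≤ ‖polyEval Λ a y‖ - ‖v y - polyEval Λ a y‖ :=
        sub_le_sub ((div_le_div_of_nonneg_right norm_max_ge (by positivity)).trans hyE)
          (happrox y hy).le
    _ ≤ ‖v y‖ := by
        rw [sub_le_iff_le_add]
        exact norm_le_norm_add_norm_sub _ _

namespace MemA

variable {d : ℕ} {V : Type*} [NormedAddCommGroup V] [Module ℝ V] {r : ℝ} {v : (Fin d → ℝ) → V}

lemma deltaApprox_le (hv : MemA r v) {m : ℕ} (hm : 1 ≤ m) :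
    deltaApprox v m ≤ semiA r v * (m : ℝ) ^ (-r) := by
  have hpow : 0 < (m : ℝ) ^ (-r) := Real.rpow_pos_of_pos (Nat.cast_pos.mpr hm) _
  rw [← div_le_iff₀ hpow]
  refine le_csInf hv fun C hC => ?_
  rw [div_le_iff₀ hpow]
  exact hC.2 m hm

lemma deltaApprox_lt_div (hv : MemA r v) {M₀ M : ℝ} (hM₀ : normA r v ≤ M₀) {m : ℕ} (hm : 1 ≤ m)
    (hcond : 4 * M₀ * (m : ℝ) ^ (-r + 1) < M) : deltaApprox v m < M / (4 * m) := by
  have hm_pos : (0 : ℝ) < m := Nat.cast_pos.mpr hm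
  calc deltaApprox v m ≤ semiA r v * (m : ℝ) ^ (-r) := hv.deltaApprox_le hm
    _ ≤ M₀ * (m : ℝ) ^ (-r) := by
        gcongr
        exact (le_max_right _ _).trans hM₀
    _ < M / (4 * m) := by
        rw [lt_div_iff₀ (by positivity)]
        rw [Real.rpow_add_one hm_pos.ne'] at hcond
        linarith

end MemA

theorem statement10_general {d : ℕ} (hd : 0 < d) {V : Type*} [NormedAddCommGroup V]
    [NormedSpace ℝ V] (v : (Fin d → ℝ) → V)
    (M : ℝ) (hM : M = ⨆ y ∈ cube d, ‖v y‖) (hMpos : 0 < M)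
    (m : ℕ) (hm : 1 ≤ m) (hδ : deltaApprox v m < M / (4 * m)) (N : ℕ) :
    ENNReal.ofReal (1 - (1 - 3 / (4 * (m : ℝ) ^ 2)) ^ N) ≤
      (Measure.pi fun _ : Fin N => uniformCube d)
        {ys : Fin N → Fin d → ℝ | (∀ i, ys i ∈ cube d) ∧ ∃ i, M / (8 * m) ≤ ‖v (ys i)‖} := by
  obtain ⟨E, hE, measure_ge, norm_ge⟩ := exists_measurableSet_div_le_norm hd hM hMpos hm hδ
  set ρN := Measure.pi fun _ : Fin N => uniformCube d
  have ae_all_mem_cube : ∀ᵐ ys ∂ρN, ∀ i, ys i ∈ cube d :=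
    ae_all_iff.mpr fun _ => Measure.tendsto_eval_ae_ae.eventually (ae_mem_cube d)
  calc ENNReal.ofReal (1 - (1 - 3 / (4 * (m : ℝ) ^ 2)) ^ N)
      ≤ ENNReal.ofReal (1 - (1 - (uniformCube d).real E) ^ N) := by
        gcongr
        exact sub_nonneg.mpr measureReal_le_one
    _ = ρN {ys | ∃ i, ys i ∈ E} := by
        rw [← ofReal_measureReal, measureReal_pi_exists_mem _ hE, Fintype.card_fin]
    _ ≤ ρN {ys | (∀ i, ys i ∈ cube d) ∧ ∃ i, M / (8 * m) ≤ ‖v (ys i)‖} := by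
        refine measure_mono_ae ?_
        filter_upwards [ae_all_mem_cube] with ys hys ⟨i, hi⟩
        exact ⟨hys, i, norm_ge _ hi (hys i)⟩

theorem statement10 {d : ℕ} (hd : 0 < d) {V : Type*} [NormedAddCommGroup V]
    [InnerProductSpace ℝ V]
    (r : ℝ) (hr : 1 < r) (v : (Fin d → ℝ) → V) (hv : MemA r v)
    (M0 : ℝ) (hM0 : normA r v ≤ M0)
    (M : ℝ) (hM : M = ⨆ y ∈ cube d, ‖v y‖) (hMpos : 0 < M)
    (m : ℕ) (hm : 1 ≤ m) (hcond : 4 * M0 * (m : ℝ) ^ (-r + 1) < M)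
    (N : ℕ) (hN : 1 ≤ N) :
    ENNReal.ofReal (1 - (1 - 3 / (4 * (m : ℝ) ^ 2)) ^ N) ≤
      (Measure.pi fun _ : Fin N => uniformCube d)
        {ys : Fin N → Fin d → ℝ | (∀ i, ys i ∈ cube d) ∧ ∃ i, M / (8 * m) ≤ ‖v (ys i)‖} :=
  statement10_general hd v M hM hMpos m hm (hv.deltaApprox_lt_div hM0 hm hcond) N
end

section
/- Let V be a real Hilbert space, K a compact subset of V, r > 2, M0 > 0, and suppose d_k(K) ≤ M0·(max{1,k})^{-r} for all k ≥ 0. Let m ≥ 1 be an integer and ε > 0 satisfy 32·M0·m^{-(r-2)} ≤ ε and 2^{4r+2}·m^{-r} ≤ 1. Then any weak greedy sequence (u^k)_{k≥0} in K with parameter γ = 1/(8m) satisfies σ_{m²}(K) ≤ ε. -/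
/-- The Kolmogorov `n`-width of a set `K` in a real inner product space:
the infimum over all subspaces `E` of dimension at most `n` of the worst-case
distance `‖u - P_E u‖ = infDist u E` over `u ∈ K`. -/
noncomputable def kolWidth {V : Type*} [NormedAddCommGroup V] [InnerProductSpace ℝ V]
    (K : Set V) (n : ℕ) : ℝ :=
  ⨅ E : {E : Submodule ℝ V // Module.rank ℝ E ≤ (n : Cardinal)},
    ⨆ u ∈ K, Metric.infDist u (E.1 : Set V)

/-- The greedy error `σ_n(K) = sup_{x ∈ K} ‖x - P_{V_n} x‖` where
`V_n = span{u^0, …, u^{n-1}}`. -/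
noncomputable def greedyErr {V : Type*} [NormedAddCommGroup V] [InnerProductSpace ℝ V]
    (u : ℕ → V) (K : Set V) (n : ℕ) : ℝ :=
  ⨆ x ∈ K, Metric.infDist x (Submodule.span ℝ (u '' Set.Iio n) : Set V)

/-- `u` is a weak greedy sequence for `K` with parameter `γ`:
`‖u^n - P_{V_n} u^n‖ ≥ γ · σ_n(K)` for all `n`. -/
def IsWeakGreedy {V : Type*} [NormedAddCommGroup V] [InnerProductSpace ℝ V]
    (u : ℕ → V) (K : Set V) (γ : ℝ) : Prop :=
  ∀ n : ℕ, γ * greedyErr u K n ≤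
    Metric.infDist (u n) (Submodule.span ℝ (u '' Set.Iio n) : Set V)

/-!
By Gram–Schmidt, the product of the distances of `u i` to `span {u 0, …, u (i - 1)}` over `i < n` is
the volume of the parallelepiped on `u 0, …, u (n - 1)`. Let `E` be a nearly optimal subspace of
dimension `j` and split `u i = P_E (u i) + (u i - P_E (u i))`. Expanding the volume multilinearly
gives `2 ^ n` terms; a term with more than `j` factors in `E` vanishes, and by Hadamard's inequality
every other one is at most `d₀ ^ j * d_j ^ (n - j)`. Each distance is at least `γ * σ_n`, hence
`(γ * σ_n) ^ n ≤ 2 ^ n * d₀ ^ j * d_j ^ (n - j)`. For `3 * j ≤ n` this yields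
`(γ * σ_n) ^ 3 ≤ 8 * d₀ * d_j ^ 2`, and with `n = m ^ 2` the choice `j = ⌊m ^ 2 / 3⌋` satisfies
`j ^ 2 ≥ m ^ 3`, so that `γ * σ_n ≤ 2 * M0 * m ^ (-r)`.
-/

open Finset InnerProductSpace Module

lemma alternatingMap_piecewise_eq_zero {𝕜 M N ι : Type*} [Field 𝕜] [AddCommGroup M]
    [Module 𝕜 M] [AddCommGroup N] [Module 𝕜 N] [DecidableEq ι] (f : M [⋀^ι]→ₗ[𝕜] N)
    {F : Submodule 𝕜 M} [FiniteDimensional 𝕜 F] {p q : ι → M} (hp : ∀ i, p i ∈ F)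
    {s : Finset ι} (hs : finrank 𝕜 F < #s) : f (s.piecewise p q) = 0 := by
  refine f.map_linearDependent _ fun hli => hs.not_ge ?_
  have hrestrict : s.piecewise p q ∘ ((↑) : s → ι) = fun i : s => p i := by
    ext1 i
    simp
  have hps : LinearIndependent 𝕜 fun i : s => p i :=
    hrestrict ▸ hli.comp ((↑) : s → ι) Subtype.val_injective
  calc #s = finrank 𝕜 (Submodule.span 𝕜 (Set.range fun i : s => p i)) := by
        rw [finrank_span_eq_card hps, Fintype.card_coe]
    _ ≤ finrank 𝕜 F :=
        Submodule.finrank_mono (Submodule.span_le.2 (Set.range_subset_iff.2 fun i => hp i))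

section AlternatingMap

variable {𝕜 M N ι : Type*} [Field 𝕜] [SeminormedAddCommGroup M] [Module 𝕜 M]
  [SeminormedAddCommGroup N] [Module 𝕜 N] [Fintype ι] {f : M [⋀^ι]→ₗ[𝕜] N} {p q : ι → M}

lemma norm_alternatingMap_piecewise_le [DecidableEq ι] {A D : ℝ}
    (hf : ∀ v, ‖f v‖ ≤ ∏ i, ‖v i‖) (hD : 0 ≤ D) (hDA : D ≤ A) (hpA : ∀ i, ‖p i‖ ≤ A)
    (hqD : ∀ i, ‖q i‖ ≤ D) {j : ℕ} (hj : j ≤ Fintype.card ι) {s : Finset ι} (hs : #s ≤ j) :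
    ‖f (s.piecewise p q)‖ ≤ A ^ j * D ^ (Fintype.card ι - j) := by
  have hA : 0 ≤ A := hD.trans hDA
  calc ‖f (s.piecewise p q)‖ ≤ ∏ i, ‖s.piecewise p q i‖ := hf _
    _ ≤ ∏ i, s.piecewise (fun _ => A) (fun _ => D) i := by
        refine prod_le_prod (fun _ _ => norm_nonneg _) fun i _ => ?_
        by_cases hi : i ∈ s <;> simp [hi, hpA, hqD]
    _ = A ^ #s * D ^ (Fintype.card ι - #s) := by
        simp [prod_piecewise, ← compl_eq_univ_sdiff, card_compl]
    _ = A ^ #s * (D ^ (j - #s) * D ^ (Fintype.card ι - j)) := by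
        rw [← pow_add]
        congr 2
        omega
    _ ≤ A ^ #s * (A ^ (j - #s) * D ^ (Fintype.card ι - j)) := by gcongr
    _ = A ^ j * D ^ (Fintype.card ι - j) := by
        rw [← mul_assoc, ← pow_add, Nat.add_sub_cancel' hs]

lemma norm_alternatingMap_add_le {F : Submodule 𝕜 M} [FiniteDimensional 𝕜 F] {A D : ℝ}
    (hf : ∀ v, ‖f v‖ ≤ ∏ i, ‖v i‖) (hp : ∀ i, p i ∈ F) (hD : 0 ≤ D) (hDA : D ≤ A)
    (hpA : ∀ i, ‖p i‖ ≤ A) (hqD : ∀ i, ‖q i‖ ≤ D) {j : ℕ} (hj : j ≤ Fintype.card ι)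
    (hF : finrank 𝕜 F ≤ j) :
    ‖f (p + q)‖ ≤ 2 ^ Fintype.card ι * (A ^ j * D ^ (Fintype.card ι - j)) := by
  classical
  have hA : 0 ≤ A := hD.trans hDA
  have hterm (s : Finset ι) : ‖f (s.piecewise p q)‖ ≤ A ^ j * D ^ (Fintype.card ι - j) := by
    rcases le_or_gt #s j with hs | hs
    · exact norm_alternatingMap_piecewise_le hf hD hDA hpA hqD hj hs
    · rw [alternatingMap_piecewise_eq_zero f hp (hF.trans_lt hs), norm_zero]
      positivity
  calc ‖f (p + q)‖ = ‖∑ s : Finset ι, f (s.piecewise p q)‖ := by rw [f.map_add_univ]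
    _ ≤ ∑ s : Finset ι, ‖f (s.piecewise p q)‖ := norm_sum_le _ _
    _ ≤ ∑ _s : Finset ι, A ^ j * D ^ (Fintype.card ι - j) := sum_le_sum fun s _ => hterm s
    _ = 2 ^ Fintype.card ι * (A ^ j * D ^ (Fintype.card ι - j)) := by simp

end AlternatingMap

section GramSchmidt

variable {𝕜 V ι : Type*} [RCLike 𝕜] [NormedAddCommGroup V] [InnerProductSpace 𝕜 V]
  [LinearOrder ι] [LocallyFiniteOrderBot ι] [WellFoundedLT ι]

lemma sum_norm_inner_gramSchmidtNormed_sq_le (u : ι → V) (s : Finset ι) (x : V) :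
    ∑ i ∈ s, ‖inner 𝕜 (gramSchmidtNormed 𝕜 u i) x‖ ^ 2 ≤ ‖x‖ ^ 2 := by
  classical
  calc ∑ i ∈ s, ‖inner 𝕜 (gramSchmidtNormed 𝕜 u i) x‖ ^ 2
      = ∑ i ∈ s with gramSchmidtNormed 𝕜 u i ≠ 0,
          ‖inner 𝕜 (gramSchmidtNormed 𝕜 u i) x‖ ^ 2 := by
        refine (sum_filter_of_ne fun i _ hi => ?_).symm
        contrapose hi
        simp [hi]
    _ = ∑ i ∈ s.subtype fun i => gramSchmidtNormed 𝕜 u i ≠ 0,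
          ‖inner 𝕜 (gramSchmidtNormed 𝕜 u i) x‖ ^ 2 := (sum_subtype_eq_sum_filter _).symm
    _ ≤ ‖x‖ ^ 2 := (gramSchmidtNormed_orthonormal' u).sum_inner_products_le x

lemma sub_gramSchmidt_mem_span (u : ι → V) (i : ι) :
    u i - gramSchmidt 𝕜 u i ∈ Submodule.span 𝕜 (u '' Set.Iio i) := by
  rw [← span_gramSchmidt_Iio 𝕜 u i, sub_eq_iff_eq_add'.2 (gramSchmidt_def'' 𝕜 u i)]
  refine Submodule.sum_mem _ fun k hk => Submodule.smul_mem _ _ (Submodule.subset_span ?_)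
  exact Set.mem_image_of_mem _ (mem_Iio.1 hk)

variable (𝕜) in
lemma infDist_span_Iio_le_norm_gramSchmidt (u : ι → V) (i : ι) :
    Metric.infDist (u i) (Submodule.span 𝕜 (u '' Set.Iio i) : Set V) ≤ ‖gramSchmidt 𝕜 u i‖ := by
  simpa only [dist_eq_norm, sub_sub_cancel] using
    Metric.infDist_le_dist_of_mem (x := u i) (sub_gramSchmidt_mem_span (𝕜 := 𝕜) u i)

lemma inner_gramSchmidt_self (u : ι → V) (i : ι) :
    inner 𝕜 (gramSchmidt 𝕜 u i) (u i) = (‖gramSchmidt 𝕜 u i‖ : 𝕜) ^ 2 := by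
  conv_lhs => rw [gramSchmidt_def'' 𝕜 u i]
  rw [inner_add_right, inner_sum, sum_eq_zero, inner_self_eq_norm_sq_to_K, add_zero]
  intro k hk
  rw [inner_smul_right, gramSchmidt_orthogonal 𝕜 u (mem_Iio.1 hk).ne', mul_zero]

lemma inner_gramSchmidtNormed_self (u : ι → V) (i : ι) :
    inner 𝕜 (gramSchmidtNormed 𝕜 u i) (u i) = (‖gramSchmidt 𝕜 u i‖ : 𝕜) := by
  rw [gramSchmidtNormed, inner_smul_left, inner_gramSchmidt_self, map_inv₀, RCLike.conj_ofReal,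
    sq, ← mul_assoc]
  exact inv_mul_mul_self _

lemma inner_gramSchmidtNormed_eq_zero (u : ι → V) {i j : ι} (hij : i < j) :
    inner 𝕜 (gramSchmidtNormed 𝕜 u j) (u i) = 0 := by
  rw [gramSchmidtNormed, inner_smul_left, gramSchmidt_inv_triangular 𝕜 u hij, mul_zero]

end GramSchmidt

lemma abs_det_le_prod_norm_row {n : ℕ} (B : Matrix (Fin n) (Fin n) ℝ) :
    |B.det| ≤ ∏ i, ‖WithLp.toLp 2 (B i)‖ := by
  have : Fact (finrank ℝ (EuclideanSpace ℝ (Fin n)) = n) := ⟨finrank_euclideanSpace_fin⟩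
  let b := EuclideanSpace.basisFun (Fin n) ℝ
  have hdet : b.toBasis.det (fun i => WithLp.toLp 2 (B i)) = B.det := by
    rw [Basis.det_apply, ← Matrix.det_transpose]
    congr 1
  rw [← hdet, ← b.toBasis.orientation.volumeForm_robust' b]
  exact b.toBasis.orientation.abs_volumeForm_apply_le _

section GramSchmidtVolume

variable {V : Type*} [NormedAddCommGroup V] [InnerProductSpace ℝ V]

/-- The signed volume of the projection of a parallelepiped onto `span {u 0, …, u (n - 1)}`,
computed in Gram–Schmidt coordinates. Directions in which `u` is linearly dependent on its
predecessors have coordinate `0`, so the volume vanishes when `u 0, …, u (n - 1)` are dependent. -/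
noncomputable def gramSchmidtVolume (u : ℕ → V) (n : ℕ) : V [⋀^Fin n]→ₗ[ℝ] ℝ :=
  Matrix.detRowAlternating.compLinearMap
    (LinearMap.pi fun i : Fin n => innerₛₗ ℝ (gramSchmidtNormed ℝ u i))

lemma gramSchmidtVolume_apply (u : ℕ → V) {n : ℕ} (v : Fin n → V) :
    gramSchmidtVolume u n v =
      (Matrix.of fun k i : Fin n => inner ℝ (gramSchmidtNormed ℝ u i) (v k)).det :=
  rfl

lemma abs_gramSchmidtVolume_le (u : ℕ → V) {n : ℕ} (v : Fin n → V) :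
    |gramSchmidtVolume u n v| ≤ ∏ i, ‖v i‖ := by
  rw [gramSchmidtVolume_apply]
  refine (abs_det_le_prod_norm_row _).trans
    (prod_le_prod (fun _ _ => norm_nonneg _) fun k _ => ?_)
  rw [EuclideanSpace.norm_eq, Real.sqrt_le_iff]
  refine ⟨norm_nonneg _, ?_⟩
  simpa only [Matrix.of_apply, sum_range] using
    sum_norm_inner_gramSchmidtNormed_sq_le (𝕜 := ℝ) u (range n) (v k)

lemma gramSchmidtVolume_self (u : ℕ → V) (n : ℕ) :
    gramSchmidtVolume u n (fun i => u i) = ∏ i ∈ range n, ‖gramSchmidt ℝ u i‖ := by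
  rw [gramSchmidtVolume_apply, Matrix.det_of_isLowerTriangular, prod_range]
  · exact prod_congr rfl fun i _ => inner_gramSchmidtNormed_self u (i : ℕ)
  · exact fun k i hki => inner_gramSchmidtNormed_eq_zero u hki

end GramSchmidtVolume

lemma norm_sub_starProjection_eq_infDist {𝕜 V : Type*} [RCLike 𝕜] [NormedAddCommGroup V]
    [InnerProductSpace 𝕜 V] (E : Submodule 𝕜 V) [E.HasOrthogonalProjection] (x : V) :
    ‖x - E.starProjection x‖ = Metric.infDist x (E : Set V) := by
  simp only [Submodule.starProjection_minimal, Metric.infDist_eq_iInf, dist_eq_norm]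
  rfl

lemma prod_infDist_span_Iio_le {V : Type*} [NormedAddCommGroup V] [InnerProductSpace ℝ V]
    (u : ℕ → V) (E : Submodule ℝ V) [FiniteDimensional ℝ E]
    {A D : ℝ} (hD : 0 ≤ D) (hDA : D ≤ A) (hA : ∀ i, ‖u i‖ ≤ A)
    (hE : ∀ i, Metric.infDist (u i) (E : Set V) ≤ D) {j n : ℕ} (hj : j ≤ n)
    (hEj : finrank ℝ E ≤ j) :
    ∏ i ∈ range n, Metric.infDist (u i) (Submodule.span ℝ (u '' Set.Iio i) : Set V) ≤
      2 ^ n * (A ^ j * D ^ (n - j)) := by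
  let p : Fin n → V := fun i => E.starProjection (u i)
  let q : Fin n → V := fun i => u i - E.starProjection (u i)
  have hpq : p + q = fun i : Fin n => u i := funext fun i => add_sub_cancel _ _
  have hvol : ‖gramSchmidtVolume u n (p + q)‖ ≤ 2 ^ n * (A ^ j * D ^ (n - j)) := by
    simpa only [Fintype.card_fin] using norm_alternatingMap_add_le (ι := Fin n) (p := p) (q := q)
      (abs_gramSchmidtVolume_le u) (fun i => E.starProjection_apply_mem (u i)) hD hDA
      (fun i => (E.norm_starProjection_apply_le (u i)).trans (hA i))
      (fun i => (norm_sub_starProjection_eq_infDist E (u i)).trans_le (hE i))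
      (hj.trans_eq (Fintype.card_fin n).symm) hEj
  calc ∏ i ∈ range n, Metric.infDist (u i) (Submodule.span ℝ (u '' Set.Iio i) : Set V)
      ≤ ∏ i ∈ range n, ‖gramSchmidt ℝ u i‖ :=
        prod_le_prod (fun _ _ => Metric.infDist_nonneg)
          fun i _ => infDist_span_Iio_le_norm_gramSchmidt ℝ u i
    _ = gramSchmidtVolume u n (p + q) := by rw [hpq, gramSchmidtVolume_self]
    _ ≤ ‖gramSchmidtVolume u n (p + q)‖ := Real.le_norm_self _
    _ ≤ 2 ^ n * (A ^ j * D ^ (n - j)) := hvol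

section Width

variable {V : Type*} [NormedAddCommGroup V] [InnerProductSpace ℝ V] {K : Set V}

/-- The deviation `sup_{u ∈ K} ‖u - P_E u‖` of `K` from the subspace `E`. Both `kolWidth` and
`greedyErr` are built from it. As a real supremum it is `0` when the distances are unbounded. -/
noncomputable def deviation (K : Set V) (E : Submodule ℝ V) : ℝ :=
  ⨆ u ∈ K, Metric.infDist u (E : Set V)

lemma deviation_nonneg (K : Set V) (E : Submodule ℝ V) : 0 ≤ deviation K E :=
  Real.iSup_nonneg fun _ => Real.iSup_nonneg fun _ => Metric.infDist_nonneg

lemma infDist_le_deviation (hK : Bornology.IsBounded K) (E : Submodule ℝ V) {x : V} (hx : x ∈ K) :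
    Metric.infDist x (E : Set V) ≤ deviation K E := by
  obtain ⟨B, hB⟩ := hK.exists_norm_le
  have hB₀ : 0 ≤ B := (norm_nonneg x).trans (hB x hx)
  have hbdd : BddAbove (Set.range fun v => ⨆ _ : v ∈ K, Metric.infDist v (E : Set V)) := by
    refine ⟨B, Set.forall_mem_range.2 fun v => Real.iSup_le (fun hv => ?_) hB₀⟩
    exact (Metric.infDist_le_dist_of_mem E.zero_mem).trans ((dist_zero_right v).trans_le (hB v hv))
  exact le_ciSup_of_le hbdd x (ciSup_pos (f := fun _ => Metric.infDist x (E : Set V)) hx).ge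

lemma deviation_anti (hK : Bornology.IsBounded K) {E F : Submodule ℝ V} (hEF : E ≤ F) :
    deviation K F ≤ deviation K E := by
  have h₀ := deviation_nonneg K E
  refine Real.iSup_le (fun x => Real.iSup_le (fun hx => ?_) h₀) h₀
  exact (Metric.infDist_le_infDist_of_subset hEF ⟨0, E.zero_mem⟩).trans
    (infDist_le_deviation hK E hx)

lemma greedyErr_nonneg (u : ℕ → V) (K : Set V) (n : ℕ) : 0 ≤ greedyErr u K n :=
  deviation_nonneg K _

lemma greedyErr_antitone (hK : Bornology.IsBounded K) (u : ℕ → V) : Antitone (greedyErr u K) :=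
  fun _ _ hin =>
    deviation_anti hK (Submodule.span_mono (Set.image_mono (Set.Iio_subset_Iio hin)))

lemma nonempty_submodule_rank_le (V : Type*) [AddCommGroup V] [Module ℝ V] (n : ℕ) :
    Nonempty {E : Submodule ℝ V // Module.rank ℝ E ≤ (n : Cardinal)} :=
  ⟨⟨⊥, by simp⟩⟩

lemma kolWidth_nonneg (K : Set V) (n : ℕ) : 0 ≤ kolWidth K n :=
  Real.iInf_nonneg fun E => deviation_nonneg K E.1

lemma kolWidth_antitone (K : Set V) : Antitone (kolWidth K) := by
  intro i j hij
  have := nonempty_submodule_rank_le V i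
  exact ciInf_mono_of_forall_exists ⟨0, Set.forall_mem_range.2 fun E => deviation_nonneg K E.1⟩
    fun E => ⟨⟨E.1, E.2.trans (Nat.cast_le.2 hij)⟩, le_rfl⟩

lemma exists_deviation_lt_of_kolWidth_lt {n : ℕ} {D : ℝ} (hD : kolWidth K n < D) :
    ∃ E : Submodule ℝ V, FiniteDimensional ℝ E ∧ finrank ℝ E ≤ n ∧ deviation K E < D := by
  have := nonempty_submodule_rank_le V n
  obtain ⟨⟨E, hE⟩, hlt⟩ := exists_lt_of_ciInf_lt hD
  exact ⟨E, rank_lt_aleph0_iff.1 (hE.trans_lt Cardinal.natCast_lt_aleph0),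
    finrank_le_of_rank_le hE, hlt⟩

lemma norm_le_kolWidth_zero (hK : Bornology.IsBounded K) {x : V} (hx : x ∈ K) :
    ‖x‖ ≤ kolWidth K 0 := by
  refine le_of_forall_gt fun D hD => ?_
  obtain ⟨E, _, hE, hlt⟩ := exists_deviation_lt_of_kolWidth_lt hD
  obtain rfl : E = ⊥ := Submodule.finrank_eq_zero.1 (Nat.le_zero.1 hE)
  simpa using (infDist_le_deviation hK ⊥ hx).trans_lt hlt

lemma prod_infDist_span_Iio_le_kolWidth (hK : Bornology.IsBounded K) {u : ℕ → V}
    (hu : ∀ i, u i ∈ K) {j n : ℕ} (hj : j ≤ n) :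
    ∏ i ∈ range n, Metric.infDist (u i) (Submodule.span ℝ (u '' Set.Iio i) : Set V) ≤
      2 ^ n * (kolWidth K 0 ^ j * kolWidth K j ^ (n - j)) := by
  let bound : ℝ → ℝ := fun D => 2 ^ n * (max (kolWidth K 0) D ^ j * D ^ (n - j))
  have hbound : ∀ D > kolWidth K j,
      ∏ i ∈ range n, Metric.infDist (u i) (Submodule.span ℝ (u '' Set.Iio i) : Set V) ≤
        bound D := by
    intro D hD
    obtain ⟨E, _, hE, hlt⟩ := exists_deviation_lt_of_kolWidth_lt hD
    exact prod_infDist_span_Iio_le u E ((kolWidth_nonneg K j).trans hD.le) (le_max_right _ _)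
      (fun i => (norm_le_kolWidth_zero hK (hu i)).trans (le_max_left _ _))
      (fun i => (infDist_le_deviation hK E (hu i)).trans hlt.le) hj hE
  have hcont : Continuous bound := by fun_prop
  have hlim := ge_of_tendsto
    (hcont.continuousWithinAt (s := Set.Ioi (kolWidth K j)) (x := kolWidth K j)).tendsto
    (eventually_mem_nhdsWithin.mono hbound)
  simpa only [bound, max_eq_left (kolWidth_antitone K j.zero_le)] using hlim

end Width

namespace IsWeakGreedy

variable {V : Type*} [NormedAddCommGroup V] [InnerProductSpace ℝ V] {K : Set V} {u : ℕ → V}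
  {γ : ℝ}

lemma mul_greedyErr_pow_le (hwg : IsWeakGreedy u K γ) (hK : Bornology.IsBounded K)
    (hu : ∀ i, u i ∈ K) (hγ : 0 ≤ γ) {j n : ℕ} (hj : j ≤ n) :
    (γ * greedyErr u K n) ^ n ≤ 2 ^ n * (kolWidth K 0 ^ j * kolWidth K j ^ (n - j)) := by
  calc (γ * greedyErr u K n) ^ n = ∏ _i ∈ range n, γ * greedyErr u K n := by simp
    _ ≤ ∏ i ∈ range n, Metric.infDist (u i) (Submodule.span ℝ (u '' Set.Iio i) : Set V) := by
        refine prod_le_prod (fun _ _ => mul_nonneg hγ (greedyErr_nonneg u K n)) fun i hi => ?_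
        exact (mul_le_mul_of_nonneg_left (greedyErr_antitone hK u (mem_range.1 hi).le) hγ).trans
          (hwg i)
    _ ≤ _ := prod_infDist_span_Iio_le_kolWidth hK hu hj

lemma mul_greedyErr_pow_three_le (hwg : IsWeakGreedy u K γ) (hK : Bornology.IsBounded K)
    (hu : ∀ i, u i ∈ K) (hγ : 0 ≤ γ) {j n : ℕ} (hn : n ≠ 0) (hj : 3 * j ≤ n) :
    (γ * greedyErr u K n) ^ 3 ≤ 2 ^ 3 * (kolWidth K 0 * kolWidth K j ^ 2) := by
  have hd₀ := kolWidth_nonneg K 0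
  have hdj := kolWidth_nonneg K j
  have hmono : kolWidth K j ≤ kolWidth K 0 := kolWidth_antitone K j.zero_le
  refine le_of_pow_le_pow_left₀ hn (by positivity) ?_
  calc ((γ * greedyErr u K n) ^ 3) ^ n = ((γ * greedyErr u K n) ^ n) ^ 3 := pow_right_comm _ _ _
    _ ≤ (2 ^ n * (kolWidth K 0 ^ j * kolWidth K j ^ (n - j))) ^ 3 := by
        have hσ := mul_nonneg hγ (greedyErr_nonneg u K n)
        gcongr
        exact hwg.mul_greedyErr_pow_le hK hu hγ (by omega)
    _ = (2 ^ 3) ^ n * (kolWidth K 0 ^ (3 * j) * kolWidth K j ^ (n - 3 * j + 2 * n)) := by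
        rw [show n - 3 * j + 2 * n = 3 * (n - j) by omega, mul_pow, mul_pow, pow_right_comm 2,
          pow_mul' _ 3 j, pow_mul' _ 3 (n - j)]
    _ ≤ (2 ^ 3) ^ n * (kolWidth K 0 ^ (3 * j) *
          (kolWidth K 0 ^ (n - 3 * j) * kolWidth K j ^ (2 * n))) := by
        rw [pow_add (kolWidth K j)]
        gcongr
    _ = (2 ^ 3 * (kolWidth K 0 * kolWidth K j ^ 2)) ^ n := by
        rw [← mul_assoc (kolWidth K 0 ^ (3 * j)), ← pow_add, Nat.add_sub_cancel' hj, mul_pow,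
          mul_pow, pow_mul (kolWidth K j)]

lemma mul_greedyErr_le_rpow (hwg : IsWeakGreedy u K γ) (hK : Bornology.IsBounded K)
    (hu : ∀ i, u i ∈ K) (hγ : 0 ≤ γ) {r M : ℝ} (hr : 0 ≤ r)
    (hd : ∀ k : ℕ, kolWidth K k ≤ M * (max 1 (k : ℝ)) ^ (-r)) {j m n : ℕ} (hm : 1 ≤ m)
    (hjn : 3 * j ≤ n) (hmj : m ^ 3 ≤ j ^ 2) :
    γ * greedyErr u K n ≤ 2 * M * (m : ℝ) ^ (-r) := by
  have hd₀ : kolWidth K 0 ≤ M := by simpa using hd 0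
  have hM : 0 ≤ M := (kolWidth_nonneg K 0).trans hd₀
  have hj : 1 ≤ j := Nat.pos_of_ne_zero fun hj₀ => by
    simpa [hj₀] using (Nat.pow_pos hm).trans_le hmj
  have hdj : kolWidth K j ≤ M * (j : ℝ) ^ (-r) := by
    simpa only [max_eq_right (Nat.one_le_cast (α := ℝ).2 hj)] using hd j
  have hjm : ((j : ℝ) ^ (-r)) ^ 2 ≤ ((m : ℝ) ^ (-r)) ^ 3 := by
    rw [Real.rpow_pow_comm j.cast_nonneg, Real.rpow_pow_comm m.cast_nonneg]
    exact Real.rpow_le_rpow_of_nonpos (by positivity) (by exact_mod_cast hmj) (by linarith)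
  refine le_of_pow_le_pow_left₀ three_ne_zero (by positivity) ?_
  calc (γ * greedyErr u K n) ^ 3 ≤ 2 ^ 3 * (kolWidth K 0 * kolWidth K j ^ 2) :=
        hwg.mul_greedyErr_pow_three_le hK hu hγ (by omega) hjn
    _ ≤ 2 ^ 3 * (M * (M * (j : ℝ) ^ (-r)) ^ 2) := by
        have hdj₀ := kolWidth_nonneg K j
        gcongr
    _ = 2 ^ 3 * M ^ 3 * ((j : ℝ) ^ (-r)) ^ 2 := by ring
    _ ≤ 2 ^ 3 * M ^ 3 * ((m : ℝ) ^ (-r)) ^ 3 := by gcongr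
    _ = (2 * M * (m : ℝ) ^ (-r)) ^ 3 := by ring

end IsWeakGreedy

lemma pow_three_le_sq_div_three_sq {m : ℕ} (hm : 16 ≤ m) : m ^ 3 ≤ (m ^ 2 / 3) ^ 2 := by
  have hdiv : m ^ 2 ≤ 4 * (m ^ 2 / 3) := by
    have hsq : 16 ^ 2 ≤ m ^ 2 := Nat.pow_le_pow_left hm 2
    omega
  nlinarith [Nat.pow_le_pow_left hdiv 2, Nat.mul_le_mul_right (m ^ 3) hm]

lemma sixteen_le_of_rpow_mul_rpow_le_one {r x : ℝ} (hr : 0 ≤ r) (hx : 0 < x)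
    (h : (2 : ℝ) ^ (4 * r + 2) * x ^ (-r) ≤ 1) : 16 ≤ x := by
  by_contra! hlt
  have hpow : x ^ r ≤ 2 ^ (4 * r) := by
    rw [Real.rpow_mul two_pos.le, show (2 : ℝ) ^ (4 : ℝ) = 16 by norm_num]
    exact Real.rpow_le_rpow hx.le hlt.le hr
  rw [Real.rpow_add two_pos, Real.rpow_neg hx.le, ← div_eq_mul_inv,
    div_le_one (Real.rpow_pos_of_pos hx r), Real.rpow_two] at h
  linarith [Real.rpow_pos_of_pos hx r]

lemma two_mul_rpow_neg_div_le {M r x : ℝ} (hM : 0 ≤ M) (hx : 1 ≤ x) :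
    2 * M * x ^ (-r) / (1 / (8 * x)) ≤ 32 * M * x ^ (-(r - 2)) := by
  have hx₀ : 0 < x := one_pos.trans_le hx
  have hsplit : x ^ (-(r - 2)) = x ^ (-r) * x ^ 2 := by
    rw [neg_sub, sub_eq_neg_add, Real.rpow_add hx₀, Real.rpow_two]
  calc 2 * M * x ^ (-r) / (1 / (8 * x)) = 16 * (M * x ^ (-r)) * x := by
        field_simp
        ring
    _ ≤ 32 * (M * x ^ (-r)) * x ^ 2 := by
        gcongr
        · norm_num
        · exact le_self_pow₀ hx two_ne_zero
    _ = 32 * M * x ^ (-(r - 2)) := by rw [hsplit]; ring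

theorem statement13_general {V : Type*} [NormedAddCommGroup V] [InnerProductSpace ℝ V]
    {K : Set V} (hK : Bornology.IsBounded K) {r M0 : ℝ} (hr : 0 ≤ r)
    (hd : ∀ k : ℕ, kolWidth K k ≤ M0 * (max 1 (k : ℝ)) ^ (-r)) {m : ℕ} (hm : 16 ≤ m)
    {γ : ℝ} (hγ : 0 < γ) {u : ℕ → V} (hu : ∀ n, u n ∈ K) (hwg : IsWeakGreedy u K γ) :
    greedyErr u K (m ^ 2) ≤ 2 * M0 * (m : ℝ) ^ (-r) / γ := by
  rw [le_div_iff₀' hγ]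
  exact hwg.mul_greedyErr_le_rpow hK hu hγ.le hr hd (by omega) (Nat.mul_div_le _ _)
    (pow_three_le_sq_div_three_sq hm)

theorem statement13 {V : Type*} [NormedAddCommGroup V] [InnerProductSpace ℝ V] [CompleteSpace V]
    (K : Set V) (hK : IsCompact K) (r M0 : ℝ) (hr : 2 < r) (hM0 : 0 < M0)
    (hd : ∀ k : ℕ, kolWidth K k ≤ M0 * (max 1 (k : ℝ)) ^ (-r))
    (m : ℕ) (hm : 1 ≤ m) (ε : ℝ) (hε : 0 < ε)
    (hε1 : 32 * M0 * (m : ℝ) ^ (-(r - 2)) ≤ ε)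
    (hε2 : (2 : ℝ) ^ (4 * r + 2) * (m : ℝ) ^ (-r) ≤ 1)
    (u : ℕ → V) (hu : ∀ n, u n ∈ K) (hwg : IsWeakGreedy u K (1 / (8 * m))) :
    greedyErr u K (m ^ 2) ≤ ε := by
  have hm16 : 16 ≤ m := by
    exact_mod_cast sixteen_le_of_rpow_mul_rpow_le_one (by linarith) (by positivity) hε2
  exact (statement13_general hK.isBounded (by linarith) hd hm16 (by positivity) hu hwg).trans
    ((two_mul_rpow_neg_div_le hM0.le (by exact_mod_cast hm)).trans hε1)
end
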